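/- Assume in addition that σ, σ' and F, regarded as functions of Ω, extend to C¹ functions on [0,δ) for some δ > 0, with σ(0) = 0, σ'(0) = σ'₀ for some 0 < σ'₀ < 2, and F(0) = F₀ > 0, so that the Einstein–Vlasov dynamical system extends to a C¹ system on [0,1]² × [0,1). Then the fixed point B₁ = (0, 1/(1+σ'₀), 0) attracts interior orbits — i.e., there exists an interior orbit (U,V,Ω)(λ) ∈ (0,1)³ with (U,V,Ω)(λ) → B₁ as λ → +∞ — if and only if σ'₀ < 1/(4+2l). -/

import Mathlib

open Filter Set

/-! In the coordinates `u = log (U / (1 - U))`, `v = log (V / (1 - V))`, `z = log η`, the point `B₁`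
is `u = -∞`, `v = -log σ'₀`, `z = -∞`. Near it the growth rate of `U` is close to
`((4 + 2l)σ'₀ - 1) / (1 + σ'₀)`, while `v` is repelled from `-log σ'₀`.

If `σ'₀ < 1 / (4 + 2l)`, then `u` and `z` decrease at positive rates as long as `v` stays in a small
interval around `-log σ'₀`, whose endpoints are crossed outwards. Since the starting values of `v`
are connected, some orbit leaves through neither endpoint (shooting); it converges to `B₁`.

If `σ'₀ ≥ 1 / (4 + 2l)`, then `u + A v` with `A = (1 - σ'₀) / σ'₀` has nonnegative derivative near
`B₁` up to an error `O(Ω)`. Along an orbit tending to `B₁` the function `Ω` decays exponentially, so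
that the error is integrable and `u + A v` cannot tend to `-∞`.
-/

open Real Asymptotics
open scoped Topology Manifold NNReal

section BoundedFlow

variable {E : Type*} [NormedAddCommGroup E] [NormedSpace ℝ E] [ProperSpace E]
  {f : E → E} {M : ℝ≥0}

theorem exists_localFlow_of_bounded (hf : ContDiff ℝ 1 f) (hM : ∀ x, ‖f x‖ ≤ M) (x₀ : E)
    (T : ℝ≥0) :
    ∃ φ : E × ℝ → E,
      (∀ x ∈ Metric.closedBall x₀ 1, φ (x, 0) = x ∧
        IsMIntegralCurveOn (I := 𝓘(ℝ, E)) (fun t => φ (x, t)) f (Ioo (-T : ℝ) T)) ∧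
      ContinuousOn φ (Metric.closedBall x₀ 1 ×ˢ Icc (-T : ℝ) T) := by
  obtain ⟨K, hK⟩ := (hf.locallyLipschitz.locallyLipschitzOn
    (s := Metric.closedBall x₀ (M * T + 1))).exists_lipschitzOnWith_of_compact
    (isCompact_closedBall _ _)
  have hPL : IsPicardLindelof (fun _ => f) (tmin := -T) (tmax := T)
      ⟨0, by simp⟩ x₀ (M * T + 1) 1 M K :=
    .of_time_independent (fun x _ => hM x) (by exact_mod_cast hK) (by simp)
  obtain ⟨φ, hφ, hcont⟩ := hPL.exists_forall_mem_closedBall_eq_hasDerivWithinAt_continuousOn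
  refine ⟨φ, fun x hx => ⟨(hφ x hx).1, fun t ht => ?_⟩, hcont⟩
  have hderiv := ((hφ x hx).2 t (Ioo_subset_Icc_self ht)).mono Ioo_subset_Icc_self
  exact hderiv.hasFDerivWithinAt.hasMFDerivWithinAt

theorem exists_flow_of_bounded (hf : ContDiff ℝ 1 f) (hM : ∀ x, ‖f x‖ ≤ M) :
    ∃ φ : E → ℝ → E, (∀ x, φ x 0 = x) ∧ (∀ x t, HasDerivAt (φ x) (f (φ x t)) t) ∧
      Continuous (Function.uncurry φ) := by
  have hfield := contMDiff_vectorSpace_iff_contDiff.2 hf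
  have hglobal (x : E) : ∃ γ : ℝ → E, γ 0 = x ∧ IsMIntegralCurve (I := 𝓘(ℝ, E)) γ f := by
    refine (exists_isMIntegralCurve_iff_exists_isMIntegralCurveOn_Ioo hfield x).2 fun T => ?_
    obtain ⟨ψ, hψ, -⟩ := exists_localFlow_of_bounded hf hM x T.toNNReal
    obtain ⟨hψ0, hψ⟩ := hψ x (Metric.mem_closedBall_self zero_le_one)
    exact ⟨_, hψ0, hψ.mono
      (Ioo_subset_Ioo (neg_le_neg (le_coe_toNNReal T)) (le_coe_toNNReal T))⟩
  choose φ hφ0 hφ using hglobal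
  have hderiv (x : E) (t : ℝ) : HasFDerivAt (φ x) (.smulRight (1 : ℝ →L[ℝ] ℝ) (f (φ x t))) t :=
    (hφ x t).hasFDerivAt
  refine ⟨φ, hφ0, fun x t => hasDerivAt_iff_hasFDerivAt.2 (hderiv x t), ?_⟩
  refine continuous_iff_continuousAt.2 fun ⟨x, t⟩ => ?_
  obtain ⟨ψ, hψ, hcont⟩ := exists_localFlow_of_bounded hf hM x (‖t‖₊ + 1)
  have hnhds : Metric.closedBall x 1 ×ˢ Ioo (-(‖t‖₊ + 1 : ℝ≥0) : ℝ) (‖t‖₊ + 1 : ℝ≥0) ∈ 𝓝 (x, t) :=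
    prod_mem_nhds (Metric.closedBall_mem_nhds x one_pos)
      (isOpen_Ioo.mem_nhds (abs_lt.1 (by simp)))
  refine ((hcont.mono (prod_mono_right Ioo_subset_Icc_self)).continuousAt hnhds).congr ?_
  filter_upwards [hnhds] with ⟨y, s⟩ ⟨hy, hs⟩
  exact isMIntegralCurveOn_Ioo_eqOn_of_contMDiff_boundaryless (t₀ := 0)
    ⟨neg_lt_zero.2 (by positivity), by positivity⟩ hfield (hψ y hy).2
    ((hφ y).isMIntegralCurveOn _) ((hψ y hy).1.trans (hφ0 y).symm) hs

end BoundedFlow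

section RealCurves

theorem tendsto_div_one_add_self {ι : Type*} {f : Filter ι} {w : ι → ℝ}
    (hw : Tendsto w f (𝓝 0)) : Tendsto (fun i => w i / (1 + w i)) f (𝓝 0) := by
  have hlim := hw.div (hw.const_add 1) (by norm_num)
  rwa [zero_div] at hlim

theorem hasDerivAt_log_sub_log_one_sub {U : ℝ → ℝ} {r t : ℝ}
    (hU : HasDerivAt U (U t * (1 - U t) * r) t) (hmem : U t ∈ Ioo (0 : ℝ) 1) :
    HasDerivAt (fun t => log (U t) - log (1 - U t)) r t := by
  have hU₀ := hmem.1.ne'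
  have hU₁ := (sub_pos.2 hmem.2).ne'
  refine ((hU.log hU₀).sub ((hU.const_sub 1).log hU₁)).congr_deriv ?_
  field_simp
  ring

theorem tendsto_atBot_of_hasDerivAt_le_neg {w w' : ℝ → ℝ} {c : ℝ}
    (hw : ∀ t, HasDerivAt w (w' t) t) (hc : 0 < c) (hle : ∀ᶠ t in atTop, w' t ≤ -c) :
    Tendsto w atTop atBot := by
  obtain ⟨T, hT⟩ := eventually_atTop.1 hle
  have hbound : ∀ᶠ t in atTop, w t ≤ w T + -c * (t - T) := by
    filter_upwards [eventually_ge_atTop T] with t ht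
    have := (convex_Ici T).image_sub_le_mul_sub_of_deriv_le
      (fun s _ => (hw s).continuousAt.continuousWithinAt)
      (fun s _ => (hw s).differentiableAt.differentiableWithinAt)
      (fun s hs => (hw s).deriv.trans_le (hT s (interior_subset hs))) T self_mem_Ici t ht ht
    linarith
  refine tendsto_atBot_mono' _ hbound (tendsto_atBot_add_const_left _ _ ?_)
  exact (tendsto_atTop_add_const_right _ (-T) tendsto_id).const_mul_atTop_of_neg (neg_lt_zero.2 hc)

theorem forall_mem_Icc_le_of_hasDerivAt_neg {w w' : ℝ → ℝ} {m a b : ℝ}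
    (hw : ∀ t, HasDerivAt w (w' t) t) (ha : w a ≤ m)
    (hneg : ∀ t ∈ Ico a b, w t = m → w' t < 0) : ∀ t ∈ Icc a b, w t ≤ m :=
  fun _ ht => image_le_of_deriv_right_lt_deriv_boundary'
    (fun s _ => (hw s).continuousAt.continuousWithinAt) (fun s _ => (hw s).hasDerivWithinAt) ha
    continuousOn_const (fun s _ => hasDerivWithinAt_const s _ m) hneg ht

theorem eventually_ge_of_bddBelow_of_repelling {w w' : ℝ → ℝ} {b c : ℝ}
    (hw : ∀ t, HasDerivAt w (w' t) t) (hbdd : IsBoundedUnder (· ≥ ·) atTop w) (hc : 0 < c)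
    (hneg : ∀ᶠ t in atTop, w t ≤ b → w' t ≤ -c) : ∀ᶠ t in atTop, b ≤ w t := by
  by_contra hbelow
  obtain ⟨T₀, hT₀⟩ := eventually_atTop.1 hneg
  obtain ⟨T, hT, hwT⟩ := frequently_atTop.1 (not_eventually.1 hbelow) T₀
  have hstay (t : ℝ) (ht : T ≤ t) : w t ≤ b :=
    forall_mem_Icc_le_of_hasDerivAt_neg hw (not_le.1 hwT).le
      (fun s hs hsb => (hT₀ s (hT.trans hs.1) hsb.le).trans_lt (neg_lt_zero.2 hc)) t ⟨ht, le_rfl⟩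
  have hbot : Tendsto w atTop atBot := tendsto_atBot_of_hasDerivAt_le_neg hw hc <| by
    filter_upwards [eventually_ge_atTop T] with t ht using hT₀ t (hT.trans ht) (hstay t ht)
  exact not_isBoundedUnder_of_tendsto_atBot hbot hbdd

theorem tendsto_of_bounded_of_repelling {w w' g : ℝ → ℝ} {a b c : ℝ}
    (hw : ∀ t, HasDerivAt w (w' t) t) (hbdd : ∀ᶠ t in atTop, w t ∈ Icc a b) (hg : StrictMono g)
    (hgc : g c = 0) (hw' : Tendsto (fun t => w' t - g (w t)) atTop (𝓝 0)) :
    Tendsto w atTop (𝓝 c) := by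
  have hge (y : ℝ) (hy : y < c) : ∀ᶠ t in atTop, y ≤ w t := by
    have hgy : g y < 0 := hgc ▸ hg hy
    refine eventually_ge_of_bddBelow_of_repelling (c := -(g y) / 2) hw
      (isBoundedUnder_of_eventually_ge (hbdd.mono fun t ht => ht.1)) (by linarith) ?_
    filter_upwards [hw'.eventually_lt_const (show 0 < -(g y) / 2 by linarith)] with t ht hwy
    linarith [hg.monotone hwy]
  have hle (y : ℝ) (hy : c < y) : ∀ᶠ t in atTop, w t ≤ y := by
    have hgy : 0 < g y := hgc ▸ hg hy
    refine (eventually_ge_of_bddBelow_of_repelling (b := -y) (c := g y / 2) (fun t => (hw t).neg)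
      (isBoundedUnder_of_eventually_ge (hbdd.mono fun t ht => neg_le_neg ht.2)) (by linarith)
      ?_).mono fun t => neg_le_neg_iff.1
    filter_upwards [hw'.eventually_const_lt (show -(g y / 2) < 0 by linarith)] with t ht hwy
    linarith [hg.monotone (neg_le_neg_iff.1 hwy)]
  refine tendsto_order.2 ⟨fun y hy => ?_, fun y hy => ?_⟩
  · obtain ⟨x, hyx, hxc⟩ := exists_between hy
    exact (hge x hxc).mono fun t => hyx.trans_le
  · obtain ⟨x, hcx, hxy⟩ := exists_between hy
    exact (hle x hcx).mono fun t ht => ht.trans_lt hxy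

theorem not_tendsto_atBot_of_hasDerivAt_ge {L L' ρ ρ' : ℝ → ℝ} {K c : ℝ}
    (hL : ∀ t, HasDerivAt L (L' t) t) (hρ : ∀ t, HasDerivAt ρ (ρ' t) t) (hρ0 : ∀ t, 0 ≤ ρ t)
    (hK : 0 ≤ K) (hc : 0 < c) (hL' : ∀ᶠ t in atTop, -(K * ρ t) ≤ L' t)
    (hρ' : ∀ᶠ t in atTop, ρ' t ≤ -(c * ρ t)) : ¬ Tendsto L atTop atBot := by
  intro hbot
  obtain ⟨T, hT⟩ := eventually_atTop.1 (hL'.and hρ')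
  set Φ : ℝ → ℝ := fun t => L t - K / c * ρ t
  have hΦ (t : ℝ) : HasDerivAt Φ (L' t - K / c * ρ' t) t := (hL t).sub ((hρ t).const_mul _)
  have hmono : MonotoneOn Φ (Ici T) := by
    refine monotoneOn_of_deriv_nonneg (convex_Ici T)
      (fun t _ => (hΦ t).continuousAt.continuousWithinAt)
      (fun t _ => (hΦ t).differentiableAt.differentiableWithinAt) fun t ht => ?_
    obtain ⟨h1, h2⟩ := hT t (interior_subset ht)
    have h3 : K / c * ρ' t ≤ -(K * ρ t) := by
      calc K / c * ρ' t ≤ K / c * -(c * ρ t) := by gcongr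
        _ = -(K * ρ t) := by field_simp
    rw [(hΦ t).deriv]
    linarith
  have hLT : ∀ᶠ t in atTop, Φ T ≤ L t := by
    filter_upwards [eventually_ge_atTop T] with t ht
    have := mul_nonneg (div_nonneg hK hc.le) (hρ0 t)
    linarith [hmono self_mem_Ici ht ht]
  obtain ⟨t, ht, ht'⟩ := (hLT.and (hbot.eventually_lt_atBot (Φ T))).exists
  exact ht.not_gt ht'

end RealCurves

section Shooting

theorem eventually_lt_right_of_hasDerivAt_pos {w : ℝ → ℝ} {w' t : ℝ} (hw : HasDerivAt w w' t)
    (hpos : 0 < w') : ∀ᶠ r in 𝓝[>] t, w t < w r := by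
  have hslope := (hasDerivWithinAt_iff_tendsto_slope' self_notMem_Ioi).1 hw.hasDerivWithinAt
  filter_upwards [hslope.eventually_const_lt hpos, self_mem_nhdsWithin] with r hr htr
  exact slope_pos_iff_of_le (le_of_lt htr) |>.1 hr

/-- The curve `w`, followed from time `0`, rises above `b` before it first drops to `a`. -/
def RisesAboveBefore (w : ℝ → ℝ) (b a : ℝ) : Prop :=
  ∃ t, 0 ≤ t ∧ b < w t ∧ ∀ s ∈ Icc 0 t, a < w s

theorem isOpen_setOf_risesAboveBefore {Q : Type*} [TopologicalSpace Q] {v : Q → ℝ → ℝ}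
    (hv : Continuous (Function.uncurry v)) (b a : ℝ) : IsOpen {q | RisesAboveBefore (v q) b a} := by
  refine isOpen_iff_mem_nhds.2 fun q ⟨t, ht, hbt, hat⟩ => ?_
  have hb : ∀ᶠ p in 𝓝 q, b < v p t :=
    (hv.comp (Continuous.prodMk_left t)).continuousAt.eventually_const_lt hbt
  have ha : ∀ᶠ p in 𝓝 q, ∀ s ∈ Icc 0 t, a < v p s :=
    isCompact_Icc.eventually_forall_of_forall_eventually fun s hs =>
      hv.continuousAt.eventually_const_lt (hat s hs)
  filter_upwards [hb, ha] with p hbp hap using ⟨t, ht, hbp, hap⟩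

variable {w w' : ℝ → ℝ} {a b : ℝ}

theorem risesAboveBefore_of_eq_top {τ : ℝ} (hw : ∀ t, HasDerivAt w (w' t) t) (hab : a < b)
    (hτ : 0 ≤ τ) (hmem : ∀ s ∈ Icc 0 τ, w s ∈ Icc a b) (hwτ : w τ = b) (htop : 0 < w' τ)
    (hbot : ∀ s ∈ Icc 0 τ, w s = a → w' s < 0) : RisesAboveBefore w b a := by
  have hlt (s : ℝ) (hs : s ∈ Icc 0 τ) : a < w s := by
    refine (hmem s hs).1.lt_of_ne' fun hsa => ?_
    have hsτ : s < τ := hs.2.lt_of_ne fun h => hab.ne (by rw [← hsa, h, hwτ])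
    have hdrop := eventually_lt_right_of_hasDerivAt_pos (hw s).neg (neg_pos.2 (hbot s hs hsa))
    obtain ⟨r, hr, hrs⟩ := (hdrop.and (Ioo_mem_nhdsGT hsτ)).exists
    exact ((hmem r ⟨hs.1.trans hrs.1.le, hrs.2.le⟩).1.trans_lt (neg_lt_neg_iff.1 hr)).ne' hsa
  have hup := eventually_lt_right_of_hasDerivAt_pos (hw τ) htop
  obtain ⟨t, ht, htb⟩ := mem_nhdsGT_iff_exists_Ioc_subset.1 hup
  refine ⟨t, hτ.trans (le_of_lt ht), hwτ ▸ htb ⟨ht, le_rfl⟩, fun s hs => ?_⟩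
  rcases le_or_gt s τ with hsτ | hsτ
  · exact hlt s ⟨hs.1, hsτ⟩
  · exact (hlt τ ⟨hτ, le_rfl⟩).trans (htb ⟨hsτ, hs.2⟩)

theorem exists_first_exit {w : ℝ → ℝ} (hw : Continuous w) {K : Set ℝ} (hK : IsClosed K)
    (h0 : w 0 ∈ K) (hexit : ∃ t, 0 ≤ t ∧ w t ∉ K) :
    ∃ τ, 0 ≤ τ ∧ (∀ s ∈ Icc 0 τ, w s ∈ K) ∧ ∃ᶠ t in 𝓝[>] τ, w t ∉ K := by
  have hbdd : BddBelow {t | 0 ≤ t ∧ w t ∉ K} := ⟨0, fun t ht => ht.1⟩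
  set τ := sInf {t | 0 ≤ t ∧ w t ∉ K}
  have hτ : 0 ≤ τ := le_csInf hexit fun t ht => ht.1
  have hbefore : Ico 0 τ ⊆ w ⁻¹' K := fun s hs =>
    by_contra fun hsK => notMem_of_lt_csInf hs.2 hbdd ⟨hs.1, hsK⟩
  have hupto : Icc 0 τ ⊆ w ⁻¹' K := by
    rcases hτ.eq_or_lt with h | h
    · simpa only [← h, Icc_self, singleton_subset_iff, mem_preimage] using h0
    · simpa only [closure_Ico h.ne] using closure_minimal hbefore (hK.preimage hw)
  refine ⟨τ, hτ, hupto, frequently_iff.2 fun hU => ?_⟩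
  obtain ⟨t, ht, htU⟩ := mem_nhdsGT_iff_exists_Ioo_subset.1 hU
  obtain ⟨s, hs, hst⟩ := exists_lt_of_csInf_lt hexit ht
  have hτs : τ < s := (csInf_le hbdd hs).lt_of_ne fun h => hs.2 (hupto ⟨hs.1, h.ge⟩)
  exact ⟨s, htU ⟨hτs, hst⟩, hs.2⟩

theorem forall_mem_Icc_or_risesAboveBefore (hw : ∀ t, HasDerivAt w (w' t) t) (hab : a < b)
    (htop : ∀ t, 0 ≤ t → (∀ s ∈ Icc 0 t, w s ∈ Icc a b) → w t = b → 0 < w' t)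
    (hbot : ∀ t, 0 ≤ t → (∀ s ∈ Icc 0 t, w s ∈ Icc a b) → w t = a → w' t < 0) :
    (∀ t, 0 ≤ t → w t ∈ Icc a b) ∨ RisesAboveBefore w b a ∨ RisesAboveBefore (-w) (-a) (-b) := by
  by_cases! hexit : ∀ t, 0 ≤ t → w t ∈ Icc a b
  · exact .inl hexit
  right
  rcases lt_or_ge b (w 0) with hb | hb
  · exact .inl ⟨0, le_rfl, hb, by simpa using hab.trans hb⟩
  rcases lt_or_ge (w 0) a with ha | ha
  · exact .inr ⟨0, le_rfl, neg_lt_neg ha, by simpa using ha.trans hab⟩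
  have hcont : Continuous w := continuous_iff_continuousAt.2 fun t => (hw t).continuousAt
  obtain ⟨τ, hτ, hmem, hleave⟩ := exists_first_exit hcont isClosed_Icc ⟨ha, hb⟩ hexit
  have hpast {s : ℝ} (hs : s ∈ Icc 0 τ) : ∀ r ∈ Icc 0 s, w r ∈ Icc a b :=
    fun r hr => hmem r ⟨hr.1, hr.2.trans hs.2⟩
  have hτ_mem : τ ∈ Icc 0 τ := ⟨hτ, le_rfl⟩
  rcases (hmem τ hτ_mem).2.eq_or_lt with hwb | hwb
  · exact .inl (risesAboveBefore_of_eq_top hw hab hτ hmem hwb (htop τ hτ hmem hwb)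
      fun s hs => hbot s hs.1 (hpast hs))
  rcases (hmem τ hτ_mem).1.eq_or_lt with hwa | hwa
  · refine .inr (risesAboveBefore_of_eq_top (fun t => (hw t).neg) (neg_lt_neg hab) hτ
      (fun s hs => ⟨neg_le_neg (hmem s hs).2, neg_le_neg (hmem s hs).1⟩) (by simp [hwa])
      (neg_pos.2 (hbot τ hτ hmem hwa.symm)) fun s hs hsb => ?_)
    exact neg_lt_zero.2 (htop s hs.1 (hpast hs) (neg_inj.1 hsb))
  · have hstay : ∀ᶠ t in 𝓝[>] τ, w t ∈ Icc a b :=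
      (hcont.continuousAt.eventually (Icc_mem_nhds hwa hwb)).filter_mono nhdsWithin_le_nhds
    exact (hleave (hstay.mono fun _ => not_not_intro)).elim

theorem exists_forall_mem_Icc_of_transverse {Q : Type*} [TopologicalSpace Q] [PreconnectedSpace Q]
    {v v' : Q → ℝ → ℝ} (hcont : Continuous (Function.uncurry v))
    (hv : ∀ q t, HasDerivAt (v q) (v' q t) t) (hab : a < b)
    (habove : ∃ q, b < v q 0) (hbelow : ∃ q, v q 0 < a)
    (htop : ∀ q t, 0 ≤ t → (∀ s ∈ Icc 0 t, v q s ∈ Icc a b) → v q t = b → 0 < v' q t)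
    (hbot : ∀ q t, 0 ≤ t → (∀ s ∈ Icc 0 t, v q s ∈ Icc a b) → v q t = a → v' q t < 0) :
    ∃ q, ∀ t, 0 ≤ t → v q t ∈ Icc a b := by
  by_contra! htrapped
  obtain ⟨p, hp⟩ := habove
  obtain ⟨q, hq⟩ := hbelow
  obtain ⟨r, -, ⟨t, ht, hbt, hat⟩, ⟨s, hs, has, hbs⟩⟩ := isPreconnected_univ
    {q | RisesAboveBefore (v q) b a} {q | RisesAboveBefore (-v q) (-a) (-b)}
    (isOpen_setOf_risesAboveBefore hcont b a) (isOpen_setOf_risesAboveBefore hcont.neg (-a) (-b))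
    (fun q _ => (forall_mem_Icc_or_risesAboveBefore (hv q) hab (htop q) (hbot q)).resolve_left
      fun h => (htrapped q).elim fun t ht => ht.2 (h t ht.1))
    ⟨p, trivial, 0, le_rfl, hp, by simpa using hab.trans hp⟩
    ⟨q, trivial, 0, le_rfl, neg_lt_neg hq, by simpa using hq.trans hab⟩
  rcases le_total s t with hst | hts
  · exact (hat s ⟨hs, hst⟩).not_gt (neg_lt_neg_iff.1 has)
  · exact (neg_lt_neg_iff.1 (hbs t ⟨ht, hts⟩)).not_gt hbt

end Shooting

/-- The quantity `H = (1 - U + σU)V` of the Einstein–Vlasov system. -/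
def flux (s U V : ℝ) : ℝ := (1 - U + s * U) * V

/-- The logarithmic growth rate `U' / (U(1 - U))`, where `s` and `p` are the values of `σ` and
`σ'`. -/
def growthU (l s p U V : ℝ) : ℝ :=
  (3 + 2 * l - (4 + 2 * l) * U) * (1 - V) - (1 + s - p) * flux s U V

/-- The logarithmic growth rate `V' / (V(1 - V))`, where `s` and `p` are the values of `σ` and
`σ'`. -/
def growthV (s p U V : ℝ) : ℝ := (2 * U - 1) * (1 - V + 2 * s * V) + p * flux s U V

/-- An interior orbit of the Einstein–Vlasov system. The radius-like variable `η = E(t)` is carried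
along with `Ω = ω(E)/(1 + ω(E))`, because `σ`, `σ'` and `F` are functions of `η`. -/
structure IsInteriorOrbit (l : ℝ) (σ σ' ω F : ℝ → ℝ) (U V E Ω : ℝ → ℝ) : Prop where
  Ω_eq (t : ℝ) : Ω t = ω (E t) / (1 + ω (E t))
  U_mem (t : ℝ) : U t ∈ Ioo (0 : ℝ) 1
  V_mem (t : ℝ) : V t ∈ Ioo (0 : ℝ) 1
  E_pos (t : ℝ) : 0 < E t
  continuous_E : Continuous E
  hasDerivAt_U (t : ℝ) :
    HasDerivAt U (U t * (1 - U t) * growthU l (σ (E t)) (σ' (E t)) (U t) (V t)) t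
  hasDerivAt_V (t : ℝ) :
    HasDerivAt V (V t * (1 - V t) * growthV (σ (E t)) (σ' (E t)) (U t) (V t)) t
  hasDerivAt_Ω (t : ℝ) :
    HasDerivAt Ω (-(Ω t * (1 - Ω t) * F (E t) * flux (σ (E t)) (U t) (V t))) t

/-- The point `B` of the state space attracts an interior orbit as `t → ∞`. -/
def AttractsInteriorOrbit (l : ℝ) (σ σ' ω F : ℝ → ℝ) (B : ℝ × ℝ × ℝ) : Prop :=
  ∃ U V E Ω : ℝ → ℝ, IsInteriorOrbit l σ σ' ω F U V E Ω ∧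
    Tendsto (fun t => (U t, V t, Ω t)) atTop (𝓝 B)

theorem attractsInteriorOrbit_iff {l : ℝ} {σ σ' ω F : ℝ → ℝ} {B : ℝ × ℝ × ℝ} :
    AttractsInteriorOrbit l σ σ' ω F B ↔ ∃ U V E Ω : ℝ → ℝ,
      (∀ t, Ω t = ω (E t) / (1 + ω (E t))) ∧
      (∀ t, U t ∈ Ioo 0 1) ∧ (∀ t, V t ∈ Ioo 0 1) ∧ (∀ t, 0 < E t) ∧ Continuous E ∧
      (∀ t, HasDerivAt U
        (U t * (1 - U t) * ((3 + 2 * l - (4 + 2 * l) * U t) * (1 - V t)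
          - (1 + σ (E t) - σ' (E t)) * ((1 - U t + σ (E t) * U t) * V t))) t) ∧
      (∀ t, HasDerivAt V
        (V t * (1 - V t) * ((2 * U t - 1) * (1 - V t + 2 * σ (E t) * V t)
          + σ' (E t) * ((1 - U t + σ (E t) * U t) * V t))) t) ∧
      (∀ t, HasDerivAt Ω
        (-(Ω t * (1 - Ω t) * F (E t) * ((1 - U t + σ (E t) * U t) * V t))) t) ∧
      Tendsto (fun t => (U t, V t, Ω t)) atTop (𝓝 B) :=
  ⟨fun ⟨U, V, E, Ω, h, hlim⟩ => ⟨U, V, E, Ω, h.Ω_eq, h.U_mem, h.V_mem, h.E_pos, h.continuous_E,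
      h.hasDerivAt_U, h.hasDerivAt_V, h.hasDerivAt_Ω, hlim⟩,
    fun ⟨U, V, E, Ω, hΩ_eq, hU, hV, hE, hEc, hU', hV', hΩ', hlim⟩ =>
      ⟨U, V, E, Ω, ⟨hΩ_eq, hU, hV, hE, hEc, hU', hV', hΩ'⟩, hlim⟩⟩

section Algebra

variable {l s p U V : ℝ}

theorem flux_mem_Icc (hs : s ∈ Icc (0 : ℝ) 1) (hU : U ∈ Icc (0 : ℝ) 1) (hV : V ∈ Icc (0 : ℝ) 1) :
    flux s U V ∈ Icc (0 : ℝ) 1 := by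
  have hfactor : 1 - U + s * U ∈ Icc (0 : ℝ) 1 :=
    ⟨by nlinarith [hs.1, hU.1, hU.2], by nlinarith [hs.2, hU.1]⟩
  exact ⟨mul_nonneg hfactor.1 hV.1, mul_le_one₀ hfactor.2 hV.1 hV.2⟩

theorem one_sub_mul_le_flux (hs : 0 ≤ s) (hU : 0 ≤ U) (hV : 0 ≤ V) :
    (1 - U) * V ≤ flux s U V :=
  mul_le_mul_of_nonneg_right (le_add_of_nonneg_right (mul_nonneg hs hU)) hV

theorem growthU_eq_add_mul_flux : growthU l s p U V = growthU l s 0 U V + p * flux s U V := by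
  simp only [growthU]
  ring

theorem growthV_eq_add_mul_flux : growthV s p U V = growthV s 0 U V + p * flux s U V := by
  simp only [growthV]
  ring

theorem abs_growthU_zero_le (hl : -1 < l) (hs : s ∈ Icc (0 : ℝ) 1) (hU : U ∈ Icc (0 : ℝ) 1)
    (hV : V ∈ Icc (0 : ℝ) 1) : |growthU l s 0 U V| ≤ 5 + 2 * l := by
  have hH := flux_mem_Icc hs hU hV
  have hlin : |3 + 2 * l - (4 + 2 * l) * U| ≤ 3 + 2 * l :=
    abs_le.2 ⟨by nlinarith [hU.2], by nlinarith [hU.1]⟩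
  have hV' : |1 - V| ≤ 1 := abs_le.2 ⟨by linarith [hV.2], by linarith [hV.1]⟩
  have hs' : |1 + s| ≤ 2 := abs_le.2 ⟨by linarith [hs.1], by linarith [hs.2]⟩
  calc |growthU l s 0 U V|
      ≤ |3 + 2 * l - (4 + 2 * l) * U| * |1 - V| + |1 + s| * |flux s U V| := by
        rw [growthU, sub_zero, ← abs_mul, ← abs_mul]
        exact abs_sub _ _
    _ ≤ (3 + 2 * l) * 1 + 2 * 1 := by
        gcongr
        · linarith
        · exact (abs_of_nonneg hH.1).trans_le hH.2
    _ = 5 + 2 * l := by ring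

theorem abs_growthV_zero_le (hs : s ∈ Icc (0 : ℝ) 1) (hU : U ∈ Icc (0 : ℝ) 1)
    (hV : V ∈ Icc (0 : ℝ) 1) : |growthV s 0 U V| ≤ 2 := by
  have hU' : |2 * U - 1| ≤ 1 := abs_le.2 ⟨by linarith [hU.1], by linarith [hU.2]⟩
  have hV' : |1 - V + 2 * s * V| ≤ 2 :=
    abs_le.2 ⟨by nlinarith [hs.1, hV.1, hV.2, mul_nonneg hs.1 hV.1],
      by nlinarith [hs.2, hV.1, hV.2]⟩
  calc |growthV s 0 U V| = |2 * U - 1| * |1 - V + 2 * s * V| := by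
        rw [growthV, zero_mul, add_zero, abs_mul]
    _ ≤ 1 * 2 := by gcongr
    _ = 2 := one_mul 2

variable {A s₀ : ℝ}

theorem growthU_add_mul_growthV (hA : A * s₀ = 1 - s₀) :
    growthU l s p U V + A * growthV s p U V =
      ((3 + 2 * l - A) * (1 - 2 * U) + (2 + 2 * l) * U) * (1 - V)
        + (2 * A * ((2 * U - 1) * V) * s - flux s U V * s
          + (1 + A) * flux s U V * (p - s₀)) := by
  simp only [growthU, growthV]
  linear_combination flux s U V * hA

theorem neg_mul_le_growthU_add_mul_growthV (hl : -1 < l) (hA : A * s₀ = 1 - s₀)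
    (hAl : A ≤ 3 + 2 * l) (hs : s ∈ Icc (0 : ℝ) 1) (hU : U ∈ Icc (0 : ℝ) (1 / 2))
    (hV : V ∈ Icc (0 : ℝ) 1) :
    -((1 + 2 * |A|) * (s + |p - s₀|)) ≤ growthU l s p U V + A * growthV s p U V := by
  have hH := flux_mem_Icc hs ⟨hU.1, hU.2.trans (by norm_num)⟩ hV
  have hmain : 0 ≤ ((3 + 2 * l - A) * (1 - 2 * U) + (2 + 2 * l) * U) * (1 - V) := by
    have hcoef := mul_nonneg (sub_nonneg.2 hAl) (show 0 ≤ 1 - 2 * U by linarith [hU.2])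
    have hcoef' := mul_nonneg (show 0 ≤ 2 + 2 * l by linarith) hU.1
    exact mul_nonneg (add_nonneg hcoef hcoef') (by linarith [hV.2])
  have hUV : |(2 * U - 1) * V| ≤ 1 :=
    abs_le.2 ⟨by nlinarith [hU.1, hV.1, hV.2], by nlinarith [hU.2, hV.1]⟩
  have hσ : |2 * A * ((2 * U - 1) * V) * s| ≤ 2 * |A| * 1 * s := by
    rw [abs_mul, abs_mul, abs_mul, abs_two, abs_of_nonneg hs.1]
    gcongr
    exact hs.1
  have hHs : flux s U V * s ≤ s := mul_le_of_le_one_left hs.1 hH.2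
  have hp : |(1 + A) * flux s U V * (p - s₀)| ≤ (1 + |A|) * 1 * |p - s₀| := by
    rw [abs_mul, abs_mul, abs_of_nonneg hH.1]
    gcongr
    · exact hH.1
    · exact (abs_add_le 1 A).trans_eq (by rw [abs_one])
    · exact hH.2
  rw [growthU_add_mul_growthV hA]
  nlinarith [neg_le_of_abs_le hσ, neg_le_of_abs_le hp,
    mul_nonneg (abs_nonneg A) (abs_nonneg (p - s₀))]

theorem abs_growthV_sub_le (hs : s ∈ Icc (0 : ℝ) 1) (hU : U ∈ Icc (0 : ℝ) 1)
    (hV : V ∈ Icc (0 : ℝ) 1) (hs₀ : 0 ≤ s₀) :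
    |growthV s p U V - ((1 + s₀) * V - 1)| ≤ (4 + s₀) * U + 2 * s + |p - s₀| := by
  have hH := flux_mem_Icc hs hU hV
  have hsplit : growthV s p U V - ((1 + s₀) * V - 1) =
      2 * U * (1 - V + 2 * s * V) - 2 * s * V - s₀ * (1 - s) * U * V + flux s U V * (p - s₀) := by
    simp only [growthV, flux]
    ring
  have hUterm : 2 * U * (1 - V + 2 * s * V) ∈ Icc 0 (4 * U) := by
    have hsV := mul_nonneg hs.1 hV.1
    have hsV' := mul_le_of_le_one_left hV.1 hs.2
    exact ⟨mul_nonneg (by linarith [hU.1]) (by linarith [hV.2]), by nlinarith [hU.1, hV.2]⟩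
  have hsterm : 2 * s * V ∈ Icc 0 (2 * s) :=
    ⟨mul_nonneg (by linarith [hs.1]) hV.1, mul_le_of_le_one_right (by linarith [hs.1]) hV.2⟩
  have hs₀term : s₀ * (1 - s) * U * V ∈ Icc 0 (s₀ * U) := by
    have hprod := mul_nonneg hs₀ hU.1
    have hfactor : (1 - s) * V ∈ Icc (0 : ℝ) 1 :=
      ⟨mul_nonneg (by linarith [hs.2]) hV.1, mul_le_one₀ (by linarith [hs.1]) hV.1 hV.2⟩
    exact ⟨by nlinarith [hfactor.1], by nlinarith [hfactor.2]⟩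
  have hpterm : |flux s U V * (p - s₀)| ≤ |p - s₀| := by
    rw [abs_mul, abs_of_nonneg hH.1]
    exact mul_le_of_le_one_left (abs_nonneg _) hH.2
  rw [hsplit, abs_le]
  constructor <;> linarith [hUterm.1, hUterm.2, hsterm.1, hsterm.2, hs₀term.1, hs₀term.2,
    abs_le.1 hpterm |>.1, abs_le.1 hpterm |>.2]

end Algebra

section LogCoordinates

/-- The growth rate of `U` in the coordinates `U = sigmoid u`, `V = sigmoid v`, `η = exp z`, which
send the fixed points of the boundary of the state space to infinity. -/
noncomputable def logGrowthU (l : ℝ) (σ σ' : ℝ → ℝ) (u v z : ℝ) : ℝ :=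
  growthU l (σ (exp z)) (σ' (exp z)) (sigmoid u) (sigmoid v)

/-- The growth rate of `V` in the coordinates of `logGrowthU`. -/
noncomputable def logGrowthV (σ σ' : ℝ → ℝ) (u v z : ℝ) : ℝ :=
  growthV (σ (exp z)) (σ' (exp z)) (sigmoid u) (sigmoid v)

/-- The decay rate of `η` in the coordinates of `logGrowthU`: the equation for `Ω` amounts to
`dη/dλ = -σ(η)H`, because `F = σ · d(log ω)/dη`. -/
noncomputable def logDecay (σ : ℝ → ℝ) (u v z : ℝ) : ℝ :=
  σ (exp z) / exp z * flux (σ (exp z)) (sigmoid u) (sigmoid v)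

/-- An orbit of the Einstein–Vlasov system in the coordinates of `logGrowthU`. -/
structure IsLogOrbit (l : ℝ) (σ σ' u v z : ℝ → ℝ) : Prop where
  hasDerivAt_u (t : ℝ) : HasDerivAt u (logGrowthU l σ σ' (u t) (v t) (z t)) t
  hasDerivAt_v (t : ℝ) : HasDerivAt v (logGrowthV σ σ' (u t) (v t) (z t)) t
  hasDerivAt_z (t : ℝ) : HasDerivAt z (-logDecay σ (u t) (v t) (z t)) t

/-- The Einstein–Vlasov vector field in the coordinates `(u + log σ(η), v + log σ(η), log η)`.
Along an orbit `(log σ(η))˙ = -σ'(η)H`, so that `σ'`, which is merely continuous, drops out and the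
field becomes `C¹`. -/
noncomputable def regularizedField (l : ℝ) (σ : ℝ → ℝ) (x : ℝ × ℝ × ℝ) : ℝ × ℝ × ℝ :=
  (logGrowthU l σ 0 (x.1 - log (σ (exp x.2.2))) (x.2.1 - log (σ (exp x.2.2))) x.2.2,
    logGrowthV σ 0 (x.1 - log (σ (exp x.2.2))) (x.2.1 - log (σ (exp x.2.2))) x.2.2,
    -logDecay σ (x.1 - log (σ (exp x.2.2))) (x.2.1 - log (σ (exp x.2.2))) x.2.2)

variable {l : ℝ} {σ σ' : ℝ → ℝ}

theorem sigmoid_mem_Icc (x : ℝ) : sigmoid x ∈ Icc (0 : ℝ) 1 :=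
  ⟨sigmoid_nonneg x, sigmoid_le_one x⟩

theorem hasDerivAt_comp_exp (hderiv : ∀ η, 0 < η → HasDerivAt σ (σ' η) η) (z : ℝ) :
    HasDerivAt (fun z => σ (exp z)) (σ' (exp z) * exp z) z :=
  (hderiv _ (exp_pos z)).comp z (hasDerivAt_exp z)

theorem contDiff_comp_exp (hderiv : ∀ η, 0 < η → HasDerivAt σ (σ' η) η)
    (hcont : ContinuousOn σ' (Ioi 0)) : ContDiff ℝ 1 fun z => σ (exp z) := by
  rw [contDiff_one_iff_deriv]
  refine ⟨fun z => (hasDerivAt_comp_exp hderiv z).differentiableAt, ?_⟩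
  rw [funext fun z => (hasDerivAt_comp_exp hderiv z).deriv]
  exact (hcont.comp_continuous continuous_exp exp_pos).mul continuous_exp

theorem contDiff_regularizedField (hpos : ∀ η, 0 < η → 0 < σ η)
    (hσ : ContDiff ℝ 1 fun z => σ (exp z)) : ContDiff ℝ 1 (regularizedField l σ) := by
  have hS : ContDiff ℝ 1 fun x : ℝ × ℝ × ℝ => σ (exp x.2.2) := hσ.comp contDiff_snd.snd
  have hG := hS.log fun x => (hpos _ (exp_pos x.2.2)).ne'
  have hsigmoid : ContDiff ℝ 1 sigmoid := contDiff_sigmoid.of_le le_top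
  have hU : ContDiff ℝ 1 fun x : ℝ × ℝ × ℝ => sigmoid (x.1 - log (σ (exp x.2.2))) :=
    hsigmoid.comp (contDiff_fst.sub hG)
  have hV : ContDiff ℝ 1 fun x : ℝ × ℝ × ℝ => sigmoid (x.2.1 - log (σ (exp x.2.2))) :=
    hsigmoid.comp (contDiff_snd.fst.sub hG)
  have hexp : ContDiff ℝ 1 fun x : ℝ × ℝ × ℝ => exp x.2.2 := contDiff_snd.snd.exp
  have hSUV := hS.prodMk (hU.prodMk hV)
  have hflux : ContDiff ℝ 1 fun y : ℝ × ℝ × ℝ => flux y.1 y.2.1 y.2.2 := by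
    simp only [flux]
    fun_prop
  have hgrowthU : ContDiff ℝ 1 fun y : ℝ × ℝ × ℝ => growthU l y.1 0 y.2.1 y.2.2 := by
    simp only [growthU]
    fun_prop
  have hgrowthV : ContDiff ℝ 1 fun y : ℝ × ℝ × ℝ => growthV y.1 0 y.2.1 y.2.2 := by
    simp only [growthV]
    fun_prop
  exact (hgrowthU.comp hSUV).prodMk <| (hgrowthV.comp hSUV).prodMk
    ((hS.div hexp fun x => (exp_pos _).ne').mul (hflux.comp hSUV)).neg

theorem logDecay_mem_Icc {C : ℝ} (hσ : ∀ η, 0 < η → σ η ∈ Ioc (0 : ℝ) 1)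
    (hC : ∀ η, 0 < η → σ η / η ≤ C) (u v z : ℝ) : logDecay σ u v z ∈ Icc 0 C := by
  have hS := hσ _ (exp_pos z)
  have hH := flux_mem_Icc (Ioc_subset_Icc_self hS) (sigmoid_mem_Icc u) (sigmoid_mem_Icc v)
  have hratio : 0 ≤ σ (exp z) / exp z := div_nonneg hS.1.le (exp_pos z).le
  exact ⟨mul_nonneg hratio hH.1,
    (mul_le_of_le_one_right hratio hH.2).trans (hC _ (exp_pos z))⟩

theorem norm_regularizedField_le {C : ℝ} (hl : -1 < l) (hσ : ∀ η, 0 < η → σ η ∈ Ioc (0 : ℝ) 1)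
    (hC : ∀ η, 0 < η → σ η / η ≤ C) (x : ℝ × ℝ × ℝ) :
    ‖regularizedField l σ x‖ ≤ 5 + 2 * l + C := by
  have hS := Ioc_subset_Icc_self (hσ _ (exp_pos x.2.2))
  have hdecay := logDecay_mem_Icc hσ hC (x.1 - log (σ (exp x.2.2)))
    (x.2.1 - log (σ (exp x.2.2))) x.2.2
  have hC₀ : 0 ≤ C := hdecay.1.trans hdecay.2
  refine norm_prod_le_iff.2 ⟨?_, norm_prod_le_iff.2 ⟨?_, ?_⟩⟩
  · exact (abs_growthU_zero_le hl hS (sigmoid_mem_Icc _) (sigmoid_mem_Icc _)).trans (by linarith)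
  · exact (abs_growthV_zero_le hS (sigmoid_mem_Icc _) (sigmoid_mem_Icc _)).trans (by linarith)
  · rw [regularizedField, norm_neg, norm_of_nonneg hdecay.1]
    linarith [hdecay.2]

theorem isLogOrbit_of_hasDerivAt_regularizedField {x : ℝ → ℝ × ℝ × ℝ}
    (hderiv : ∀ η, 0 < η → HasDerivAt σ (σ' η) η) (hpos : ∀ η, 0 < η → 0 < σ η)
    (hx : ∀ t, HasDerivAt x (regularizedField l σ (x t)) t) :
    IsLogOrbit l σ σ' (fun t => (x t).1 - log (σ (exp (x t).2.2)))
      (fun t => (x t).2.1 - log (σ (exp (x t).2.2))) fun t => (x t).2.2 := by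
  have hp (t : ℝ) : HasDerivAt (fun t => (x t).1) _ t := (hx t).fst
  have hq (t : ℝ) : HasDerivAt (fun t => (x t).2.1) _ t := (hx t).snd.fst
  have hz (t : ℝ) : HasDerivAt (fun t => (x t).2.2) _ t := (hx t).snd.snd
  have hG (t : ℝ) : HasDerivAt (fun t => log (σ (exp (x t).2.2))) (-(σ' (exp (x t).2.2) *
      flux (σ (exp (x t).2.2)) (sigmoid ((x t).1 - log (σ (exp (x t).2.2))))
        (sigmoid ((x t).2.1 - log (σ (exp (x t).2.2)))))) t := by
    have hσ := (hpos _ (exp_pos (x t).2.2)).ne'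
    refine (((hasDerivAt_comp_exp hderiv _).log hσ).comp t (hz t)).congr_deriv ?_
    have hexp := (exp_pos (x t).2.2).ne'
    simp only [regularizedField, logDecay]
    field_simp
  refine ⟨fun t => ((hp t).sub (hG t)).congr_deriv ?_,
    fun t => ((hq t).sub (hG t)).congr_deriv ?_, hz⟩
  · rw [sub_neg_eq_add]
    exact growthU_eq_add_mul_flux.symm
  · rw [sub_neg_eq_add]
    exact growthV_eq_add_mul_flux.symm

theorem exists_continuous_family_isLogOrbit {C : ℝ} (hl : -1 < l)
    (hderiv : ∀ η, 0 < η → HasDerivAt σ (σ' η) η) (hcont : ContinuousOn σ' (Ioi 0))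
    (hσ : ∀ η, 0 < η → σ η ∈ Ioc (0 : ℝ) 1) (hC : ∀ η, 0 < η → σ η / η ≤ C) (u₀ z₀ : ℝ) :
    ∃ u v z : ℝ → ℝ → ℝ, (∀ q, IsLogOrbit l σ σ' (u q) (v q) (z q)) ∧
      (∀ q, u q 0 = u₀ ∧ v q 0 = q ∧ z q 0 = z₀) ∧ Continuous (Function.uncurry v) := by
  have hpos η (hη : 0 < η) : 0 < σ η := (hσ η hη).1
  have hS := contDiff_comp_exp hderiv hcont
  have hG : Continuous fun z => log (σ (exp z)) :=
    hS.continuous.log fun z => (hpos _ (exp_pos z)).ne'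
  obtain ⟨φ, hφ₀, hφ, hφc⟩ := exists_flow_of_bounded
    (contDiff_regularizedField (l := l) hpos hS) fun x =>
      (norm_regularizedField_le hl hσ hC x).trans (le_coe_toNNReal _)
  let g := log (σ (exp z₀))
  let x (q : ℝ) : ℝ → ℝ × ℝ × ℝ := φ (u₀ + g, q + g, z₀)
  have hxc : Continuous (Function.uncurry x) :=
    hφc.comp (f := fun p : ℝ × ℝ => ((u₀ + g, p.1 + g, z₀), p.2)) (by fun_prop)
  refine ⟨_, _, _, fun q => isLogOrbit_of_hasDerivAt_regularizedField hderiv hpos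
    (x := x q) (hφ _), fun q => ?_, hxc.snd.fst.sub (hG.comp hxc.snd.snd)⟩
  simp only [x, hφ₀, g, add_sub_cancel_right, and_self]

end LogCoordinates

section Trapping

variable {l s : ℝ} {σ σ' : ℝ → ℝ}

theorem tendsto_div_self_of_tendsto_deriv (hderiv : ∀ η, 0 < η → HasDerivAt σ (σ' η) η)
    (hσ₀ : Tendsto σ (𝓝[>] 0) (𝓝 0)) (hσ'₀ : Tendsto σ' (𝓝[>] 0) (𝓝 s)) :
    Tendsto (fun η => σ η / η) (𝓝[>] 0) (𝓝 s) := by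
  refine HasDerivAt.lhopital_zero_nhdsGT (f' := σ') (g' := fun _ => 1)
    (eventually_mem_nhdsWithin.mono hderiv) (Eventually.of_forall hasDerivAt_id')
    (Eventually.of_forall fun _ => one_ne_zero) hσ₀ ?_ (by simpa only [div_one] using hσ'₀)
  exact tendsto_id.mono_left nhdsWithin_le_nhds

theorem exists_div_self_le (hσ : ∀ η, 0 < η → σ η ≤ 1)
    (hratio : Tendsto (fun η => σ η / η) (𝓝[>] 0) (𝓝 s)) : ∃ C, ∀ η, 0 < η → σ η / η ≤ C := by
  obtain ⟨ε, hε, hsmall⟩ := mem_nhdsGT_iff_exists_Ioo_subset.1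
    (hratio.eventually_le_const (lt_add_one s))
  refine ⟨max (s + 1) (1 / ε), fun η hη => ?_⟩
  obtain hlt | hge := lt_or_ge η ε
  · exact (hsmall ⟨hη, hlt⟩ : σ η / η ≤ s + 1).trans (le_max_left _ _)
  · exact (div_le_div₀ zero_le_one (hσ η hη) hε hge).trans (le_max_right _ _)

/-- A region `u ≤ m`, `a ≤ v ≤ b`, `z ≤ z₀` in logarithmic coordinates which orbits can leave only
through the faces `v = a` and `v = b`, and do so transversally. -/
structure IsTrappingBox (l : ℝ) (σ σ' : ℝ → ℝ) (a b m z₀ c k : ℝ) : Prop where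
  lt : a < b
  c_pos : 0 < c
  k_pos : 0 < k
  growthU_le {u v z : ℝ} (hu : u ≤ m) (hv : v ∈ Icc a b) (hz : z ≤ z₀) :
    logGrowthU l σ σ' u v z ≤ -c
  growthV_pos {u z : ℝ} (hu : u ≤ m) (hz : z ≤ z₀) : 0 < logGrowthV σ σ' u b z
  growthV_neg {u z : ℝ} (hu : u ≤ m) (hz : z ≤ z₀) : logGrowthV σ σ' u a z < 0
  le_ratio {z : ℝ} (hz : z ≤ z₀) : k ≤ σ (exp z) / exp z

theorem tendsto_logGrowthU {ι : Type*} {f : Filter ι} {u v z : ι → ℝ} {v₀ : ℝ}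
    (hσ₀ : Tendsto σ (𝓝[>] 0) (𝓝 0)) (hσ'₀ : Tendsto σ' (𝓝[>] 0) (𝓝 s))
    (hu : Tendsto u f atBot) (hv : Tendsto v f (𝓝 v₀)) (hz : Tendsto z f atBot) :
    Tendsto (fun i => logGrowthU l σ σ' (u i) (v i) (z i)) f
      (𝓝 (growthU l 0 s 0 (sigmoid v₀))) := by
  have hη := tendsto_exp_atBot_nhdsGT.comp hz
  have hU := tendsto_sigmoid_atBot.comp hu
  have hV := (continuous_sigmoid.tendsto v₀).comp hv
  have hS := hσ₀.comp hη
  have hH := ((hU.const_sub 1).add (hS.mul hU)).mul hV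
  exact (((hU.const_mul _).const_sub _).mul (hV.const_sub 1)).sub
    (((hS.const_add 1).sub (hσ'₀.comp hη)).mul hH)

theorem tendsto_logGrowthV_sub {ι : Type*} {f : Filter ι} {u v z : ι → ℝ}
    (hσ : ∀ η, 0 < η → σ η ∈ Ioc (0 : ℝ) 1) (hs : 0 ≤ s) (hσ₀ : Tendsto σ (𝓝[>] 0) (𝓝 0))
    (hσ'₀ : Tendsto σ' (𝓝[>] 0) (𝓝 s)) (hu : Tendsto u f atBot) (hz : Tendsto z f atBot) :
    Tendsto (fun i => logGrowthV σ σ' (u i) (v i) (z i) - ((1 + s) * sigmoid (v i) - 1)) f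
      (𝓝 0) := by
  have hη := tendsto_exp_atBot_nhdsGT.comp hz
  refine squeeze_zero_norm (fun i => abs_growthV_sub_le (Ioc_subset_Icc_self (hσ _ (exp_pos _)))
    (sigmoid_mem_Icc _) (sigmoid_mem_Icc _) hs) ?_
  simpa only [Function.comp_apply, mul_zero, sub_self, abs_zero, add_zero] using
    (((tendsto_sigmoid_atBot.comp hu).const_mul (4 + s)).add ((hσ₀.comp hη).const_mul 2)).add
      ((hσ'₀.comp hη).sub_const s).abs

theorem growthU_zero_fixedPoint (hs : 0 < s) :
    growthU l 0 s 0 (sigmoid (-log s)) = ((4 + 2 * l) * s - 1) / (1 + s) := by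
  simp only [growthU, flux, sigmoid, neg_neg, exp_log hs]
  field_simp
  ring

theorem one_add_mul_sigmoid_neg_log (hs : 0 < s) : (1 + s) * sigmoid (-log s) - 1 = 0 := by
  rw [sigmoid, neg_neg, exp_log hs, mul_inv_cancel₀ (by positivity), sub_self]

theorem strictMono_one_add_mul_sigmoid_sub_one (hs : 0 < s) :
    StrictMono fun v => (1 + s) * sigmoid v - 1 := fun _ _ hv =>
  sub_lt_sub_right (mul_lt_mul_of_pos_left (sigmoid_lt hv) (by positivity)) 1

theorem exists_eventually_logGrowthU_le (hl : -1 < l) (hs : 0 < s) (hsl : s < 1 / (4 + 2 * l))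
    (hσ₀ : Tendsto σ (𝓝[>] 0) (𝓝 0)) (hσ'₀ : Tendsto σ' (𝓝[>] 0) (𝓝 s)) :
    ∃ c > 0, ∃ ε > 0, ∀ᶠ x : ℝ × ℝ in atBot ×ˢ atBot,
      ∀ v ∈ Icc (-log s - ε) (-log s + ε), logGrowthU l σ σ' x.1 v x.2 ≤ -c := by
  have hneg : growthU l 0 s 0 (sigmoid (-log s)) < 0 := by
    rw [lt_div_iff₀ (by linarith), mul_comm] at hsl
    rw [growthU_zero_fixedPoint hs]
    exact div_neg_of_neg_of_pos (by linarith) (by linarith)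
  obtain ⟨c', hc', hc'0⟩ := exists_between hneg
  have hlim := tendsto_logGrowthU (l := l) (f := 𝓝 (-log s) ×ˢ atBot ×ˢ atBot) hσ₀ hσ'₀
    (tendsto_fst.comp tendsto_snd) tendsto_fst (tendsto_snd.comp tendsto_snd)
  obtain ⟨P, hP, Q, hQ, hPQ⟩ := eventually_prod_iff.1 (hlim.eventually_le_const hc')
  obtain ⟨ε, hε, hεP⟩ := (nhds_basis_Icc_pos (-log s)).eventually_iff.1 hP
  exact ⟨-c', neg_pos.2 hc'0, ε, hε, hQ.mono fun x hx v hv =>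
    (hPQ (hεP hv) hx).trans_eq (neg_neg c').symm⟩

theorem exists_isTrappingBox (hl : -1 < l) (hs : 0 < s) (hsl : s < 1 / (4 + 2 * l))
    (hσ : ∀ η, 0 < η → σ η ∈ Ioc (0 : ℝ) 1) (hσ₀ : Tendsto σ (𝓝[>] 0) (𝓝 0))
    (hσ'₀ : Tendsto σ' (𝓝[>] 0) (𝓝 s)) (hratio : Tendsto (fun η => σ η / η) (𝓝[>] 0) (𝓝 s)) :
    ∃ a b m z₀ c k, IsTrappingBox l σ σ' a b m z₀ c k := by
  obtain ⟨c, hc, ε, hε, hU⟩ := exists_eventually_logGrowthU_le hl hs hsl hσ₀ hσ'₀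
  have hg := strictMono_one_add_mul_sigmoid_sub_one hs
  have hg₀ := one_add_mul_sigmoid_neg_log hs
  have hV (v : ℝ) := tendsto_logGrowthV_sub (v := fun _ => v) hσ hs.le hσ₀ hσ'₀
    (f := atBot ×ˢ atBot) tendsto_fst tendsto_snd
  have hVb : ∀ᶠ x : ℝ × ℝ in atBot ×ˢ atBot, 0 < logGrowthV σ σ' x.1 (-log s + ε) x.2 := by
    have hpos := hg₀.symm.trans_lt (hg (lt_add_of_pos_right (-log s) hε))
    filter_upwards [(hV _).eventually_const_lt (neg_lt_zero.2 hpos)] with x hx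
    linarith
  have hVa : ∀ᶠ x : ℝ × ℝ in atBot ×ˢ atBot, logGrowthV σ σ' x.1 (-log s - ε) x.2 < 0 := by
    have hneg := (hg (sub_lt_self (-log s) hε)).trans_eq hg₀
    filter_upwards [(hV _).eventually_lt_const (neg_pos.2 hneg)] with x hx
    linarith
  have hk : ∀ᶠ x : ℝ × ℝ in atBot ×ˢ atBot, s / 2 ≤ σ (exp x.2) / exp x.2 :=
    ((hratio.comp tendsto_exp_atBot_nhdsGT).comp tendsto_snd).eventually_const_le
      (half_lt_self hs)
  obtain ⟨⟨m, z₀⟩, -, hbox⟩ := (atBot_basis.prod atBot_basis).eventually_iff.1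
    (hU.and (hVb.and (hVa.and hk)))
  exact ⟨-log s - ε, -log s + ε, m, z₀, c, s / 2, {
    lt := by linarith
    c_pos := hc
    k_pos := half_pos hs
    growthU_le := fun hu hv hz => (@hbox (_, _) ⟨hu, hz⟩).1 _ hv
    growthV_pos := fun hu hz => (@hbox (_, _) ⟨hu, hz⟩).2.1
    growthV_neg := fun hu hz => (@hbox (_, _) ⟨hu, hz⟩).2.2.1
    le_ratio := fun {z} hz => (@hbox (m, z) ⟨le_refl m, hz⟩).2.2.2 }⟩

variable {u v z : ℝ → ℝ} {a b m z₀ c k : ℝ}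

theorem IsLogOrbit.antitone_z (h : IsLogOrbit l σ σ' u v z)
    (hσ : ∀ η, 0 < η → σ η ∈ Ioc (0 : ℝ) 1) : Antitone z := by
  refine antitone_of_hasDerivAt_nonpos h.hasDerivAt_z fun t => neg_nonpos.2 ?_
  have hS := hσ _ (exp_pos (z t))
  exact mul_nonneg (div_nonneg hS.1.le (exp_pos _).le)
    (flux_mem_Icc (Ioc_subset_Icc_self hS) (sigmoid_mem_Icc _) (sigmoid_mem_Icc _)).1

theorem IsTrappingBox.forall_mem_Icc_u_le (hbox : IsTrappingBox l σ σ' a b m z₀ c k)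
    (h : IsLogOrbit l σ σ' u v z) (hu₀ : u 0 ≤ m) (hz : ∀ t, 0 ≤ t → z t ≤ z₀) {T : ℝ}
    (hv : ∀ t ∈ Icc 0 T, v t ∈ Icc a b) : ∀ t ∈ Icc 0 T, u t ≤ m :=
  forall_mem_Icc_le_of_hasDerivAt_neg h.hasDerivAt_u hu₀ fun t ht hut =>
    (hbox.growthU_le hut.le (hv t (Ico_subset_Icc_self ht)) (hz t ht.1)).trans_lt
      (neg_lt_zero.2 hbox.c_pos)

theorem IsTrappingBox.exists_isLogOrbit {C : ℝ} (hbox : IsTrappingBox l σ σ' a b m z₀ c k)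
    (hl : -1 < l) (hderiv : ∀ η, 0 < η → HasDerivAt σ (σ' η) η)
    (hcont : ContinuousOn σ' (Ioi 0)) (hσ : ∀ η, 0 < η → σ η ∈ Ioc (0 : ℝ) 1)
    (hC : ∀ η, 0 < η → σ η / η ≤ C) :
    ∃ u v z, IsLogOrbit l σ σ' u v z ∧
      ∀ t, 0 ≤ t → u t ≤ m ∧ v t ∈ Icc a b ∧ z t ≤ z₀ := by
  obtain ⟨u, v, z, horbit, hinit, hvc⟩ :=
    exists_continuous_family_isLogOrbit hl hderiv hcont hσ hC m z₀
  have hz (q t : ℝ) (ht : 0 ≤ t) : z q t ≤ z₀ :=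
    ((horbit q).antitone_z hσ ht).trans_eq (hinit q).2.2
  have hu (q t : ℝ) (ht : 0 ≤ t) (hv : ∀ r ∈ Icc 0 t, v q r ∈ Icc a b) : u q t ≤ m :=
    hbox.forall_mem_Icc_u_le (horbit q) (hinit q).1.le (hz q) hv t ⟨ht, le_rfl⟩
  obtain ⟨q, hq⟩ := exists_forall_mem_Icc_of_transverse hvc
    (fun q => (horbit q).hasDerivAt_v) hbox.lt
    ⟨b + 1, (lt_add_one b).trans_eq (hinit _).2.1.symm⟩
    ⟨a - 1, (hinit _).2.1.trans_lt (sub_one_lt a)⟩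
    (fun q t ht hv hvt => by
      rw [hvt]
      exact hbox.growthV_pos (hu q t ht hv) (hz q t ht))
    (fun q t ht hv hvt => by
      rw [hvt]
      exact hbox.growthV_neg (hu q t ht hv) (hz q t ht))
  exact ⟨u q, v q, z q, horbit q, fun t ht =>
    ⟨hu q t ht fun r hr => hq r hr.1, hq t ht, hz q t ht⟩⟩

theorem IsTrappingBox.tendsto_u (hbox : IsTrappingBox l σ σ' a b m z₀ c k)
    (h : IsLogOrbit l σ σ' u v z) (hmem : ∀ t, 0 ≤ t → u t ≤ m ∧ v t ∈ Icc a b ∧ z t ≤ z₀) :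
    Tendsto u atTop atBot := by
  refine tendsto_atBot_of_hasDerivAt_le_neg h.hasDerivAt_u hbox.c_pos ?_
  filter_upwards [eventually_ge_atTop 0] with t ht
  obtain ⟨hu, hv, hz⟩ := hmem t ht
  exact hbox.growthU_le hu hv hz

theorem IsTrappingBox.tendsto_z (hbox : IsTrappingBox l σ σ' a b m z₀ c k)
    (h : IsLogOrbit l σ σ' u v z) (hσ : ∀ η, 0 < η → 0 ≤ σ η)
    (hmem : ∀ t, 0 ≤ t → u t ≤ m ∧ v t ∈ Icc a b ∧ z t ≤ z₀) : Tendsto z atTop atBot := by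
  have hm : 0 < 1 - sigmoid m := sub_pos.2 (sigmoid_lt_one m)
  have hrate : 0 < k * ((1 - sigmoid m) * sigmoid a) :=
    mul_pos hbox.k_pos (mul_pos hm (sigmoid_pos a))
  refine tendsto_atBot_of_hasDerivAt_le_neg h.hasDerivAt_z hrate ?_
  filter_upwards [eventually_ge_atTop 0] with t ht
  obtain ⟨hu, hv, hz⟩ := hmem t ht
  have hflux : (1 - sigmoid m) * sigmoid a ≤
      flux (σ (exp (z t))) (sigmoid (u t)) (sigmoid (v t)) := by
    have hU : 1 - sigmoid m ≤ 1 - sigmoid (u t) := sub_le_sub_left (sigmoid_le hu) 1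
    exact (mul_le_mul hU (sigmoid_le hv.1) (sigmoid_nonneg a) (hm.le.trans hU)).trans
      (one_sub_mul_le_flux (hσ _ (exp_pos (z t))) (sigmoid_nonneg _) (sigmoid_nonneg _))
  exact neg_le_neg (mul_le_mul (hbox.le_ratio hz) hflux
    (mul_nonneg hm.le (sigmoid_nonneg a)) (hbox.k_pos.le.trans (hbox.le_ratio hz)))

theorem exists_isLogOrbit_tendsto (hl : -1 < l) (hs : 0 < s) (hsl : s < 1 / (4 + 2 * l))
    (hderiv : ∀ η, 0 < η → HasDerivAt σ (σ' η) η) (hcont : ContinuousOn σ' (Ioi 0))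
    (hσ : ∀ η, 0 < η → σ η ∈ Ioc (0 : ℝ) 1) (hσ₀ : Tendsto σ (𝓝[>] 0) (𝓝 0))
    (hσ'₀ : Tendsto σ' (𝓝[>] 0) (𝓝 s)) :
    ∃ u v z, IsLogOrbit l σ σ' u v z ∧ Tendsto u atTop atBot ∧ Tendsto v atTop (𝓝 (-log s)) ∧
      Tendsto z atTop atBot := by
  have hratio := tendsto_div_self_of_tendsto_deriv hderiv hσ₀ hσ'₀
  obtain ⟨C, hC⟩ := exists_div_self_le (fun η hη => (hσ η hη).2) hratio
  obtain ⟨a, b, m, z₀, c, k, hbox⟩ := exists_isTrappingBox hl hs hsl hσ hσ₀ hσ'₀ hratio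
  obtain ⟨u, v, z, horbit, hmem⟩ := hbox.exists_isLogOrbit hl hderiv hcont hσ hC
  have hu := hbox.tendsto_u horbit hmem
  have hz := hbox.tendsto_z horbit (fun η hη => (hσ η hη).1.le) hmem
  have hbdd : ∀ᶠ t in atTop, v t ∈ Icc a b :=
    (eventually_ge_atTop 0).mono fun t ht => (hmem t ht).2.1
  exact ⟨u, v, z, horbit, hu, tendsto_of_bounded_of_repelling horbit.hasDerivAt_v hbdd
    (strictMono_one_add_mul_sigmoid_sub_one hs) (one_add_mul_sigmoid_neg_log hs)
    (tendsto_logGrowthV_sub hσ hs.le hσ₀ hσ'₀ hu hz), hz⟩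

end Trapping

section Attraction

variable {l s : ℝ} {σ σ' ω ω' F : ℝ → ℝ}

theorem IsLogOrbit.isInteriorOrbit {u v z : ℝ → ℝ} (h : IsLogOrbit l σ σ' u v z)
    (hωderiv : ∀ η, 0 < η → HasDerivAt ω (ω' η) η) (hωpos : ∀ η, 0 < η → 0 < ω η)
    (hF : ∀ η, 0 < η → F η = σ η * (ω' η / ω η)) :
    IsInteriorOrbit l σ σ' ω F (fun t => sigmoid (u t)) (fun t => sigmoid (v t))
      (fun t => exp (z t)) fun t => ω (exp (z t)) / (1 + ω (exp (z t))) where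
  Ω_eq _ := rfl
  U_mem t := ⟨sigmoid_pos (u t), sigmoid_lt_one (u t)⟩
  V_mem t := ⟨sigmoid_pos (v t), sigmoid_lt_one (v t)⟩
  E_pos t := exp_pos (z t)
  continuous_E := continuous_exp.comp <|
    continuous_iff_continuousAt.2 fun t => (h.hasDerivAt_z t).continuousAt
  hasDerivAt_U t := (hasDerivAt_sigmoid _).comp t (h.hasDerivAt_u t)
  hasDerivAt_V t := (hasDerivAt_sigmoid _).comp t (h.hasDerivAt_v t)
  hasDerivAt_Ω t := by
    have hω : HasDerivAt (fun t => ω (exp (z t))) _ t :=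
      (hωderiv _ (exp_pos (z t))).comp t (h.hasDerivAt_z t).exp
    have hpos := hωpos _ (exp_pos (z t))
    have hone : 1 + ω (exp (z t)) ≠ 0 := by positivity
    refine (hω.div (hω.const_add 1) hone).congr_deriv ?_
    rw [hF _ (exp_pos _), logDecay]
    have hexp := (exp_pos (z t)).ne'
    field_simp
    ring

theorem attractsInteriorOrbit_of_lt (hl : -1 < l) (hs : 0 < s) (hsl : s < 1 / (4 + 2 * l))
    (hderiv : ∀ η, 0 < η → HasDerivAt σ (σ' η) η) (hcont : ContinuousOn σ' (Ioi 0))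
    (hσ : ∀ η, 0 < η → σ η ∈ Ioc (0 : ℝ) 1) (hσ₀ : Tendsto σ (𝓝[>] 0) (𝓝 0))
    (hσ'₀ : Tendsto σ' (𝓝[>] 0) (𝓝 s)) (hωderiv : ∀ η, 0 < η → HasDerivAt ω (ω' η) η)
    (hωpos : ∀ η, 0 < η → 0 < ω η) (hω₀ : Tendsto ω (𝓝[>] 0) (𝓝 0))
    (hF : ∀ η, 0 < η → F η = σ η * (ω' η / ω η)) :
    AttractsInteriorOrbit l σ σ' ω F (0, 1 / (1 + s), 0) := by
  obtain ⟨u, v, z, horbit, hu, hv, hz⟩ :=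
    exists_isLogOrbit_tendsto hl hs hsl hderiv hcont hσ hσ₀ hσ'₀
  have hV : sigmoid (-log s) = 1 / (1 + s) := by
    rw [sigmoid, neg_neg, exp_log hs, one_div]
  refine ⟨_, _, _, _, horbit.isInteriorOrbit hωderiv hωpos hF,
    (tendsto_sigmoid_atBot.comp hu).prodMk_nhds (.prodMk_nhds ?_ ?_)⟩
  · rw [← hV]
    exact (continuous_sigmoid.tendsto _).comp hv
  · exact tendsto_div_one_add_self (hω₀.comp (tendsto_exp_atBot_nhdsGT.comp hz))

theorem tendsto_nhdsGT_zero_of_tendsto_div_one_add {E : ℝ → ℝ} (hωpos : ∀ η, 0 < η → 0 < ω η)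
    (hωmono : StrictMonoOn ω (Ioi 0)) (hE : ∀ t, 0 < E t)
    (hlim : Tendsto (fun t => ω (E t) / (1 + ω (E t))) atTop (𝓝 0)) :
    Tendsto E atTop (𝓝[>] 0) := by
  refine (nhdsGT_basis 0).tendsto_right_iff.2 fun ε hε => ?_
  have hωε := hωpos ε hε
  filter_upwards [hlim.eventually_lt_const (div_pos hωε (by positivity : 0 < 1 + ω ε))] with t ht
  have hωE := hωpos _ (hE t)
  rw [div_lt_div_iff₀ (by positivity) (by positivity)] at ht
  exact ⟨hE t, (hωmono.lt_iff_lt (hE t) hε).1 (by linarith)⟩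

/-- The function `log (U / (1 - U)) + A log (V / (1 - V))` on the state space. For `A = (1 - s) / s`
its derivative along orbits is nonnegative at the fixed point `B₁` when `(4 + 2l)s ≥ 1`, up to
errors bounded by multiples of `Ω`. -/
noncomputable def logitCombination (A U V : ℝ) : ℝ :=
  log U - log (1 - U) + A * (log V - log (1 - V))

theorem tendsto_logitCombination {ι : Type*} {f : Filter ι} {U V : ι → ℝ} {A V₀ : ℝ}
    (hV₀ : V₀ ∈ Ioo (0 : ℝ) 1) (hU : Tendsto U f (𝓝[>] 0)) (hV : Tendsto V f (𝓝 V₀)) :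
    Tendsto (fun i => logitCombination A (U i) (V i)) f atBot := by
  have hlogU := tendsto_log_nhdsGT_zero.comp hU
  have hrest := (((hU.mono_right nhdsWithin_le_nhds).const_sub 1).log (by norm_num)).neg.add
    (((hV.log hV₀.1.ne').sub ((hV.const_sub 1).log (sub_pos.2 hV₀.2).ne')).const_mul A)
  refine (hlogU.atBot_add hrest).congr fun i => ?_
  simp only [logitCombination, Function.comp_apply]
  ring

variable {U V E Ω : ℝ → ℝ}

theorem IsInteriorOrbit.hasDerivAt_logitCombination (h : IsInteriorOrbit l σ σ' ω F U V E Ω)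
    (A t : ℝ) : HasDerivAt (fun t => logitCombination A (U t) (V t))
      (growthU l (σ (E t)) (σ' (E t)) (U t) (V t) +
        A * growthV (σ (E t)) (σ' (E t)) (U t) (V t)) t :=
  (hasDerivAt_log_sub_log_one_sub (h.hasDerivAt_U t) (h.U_mem t)).add
    ((hasDerivAt_log_sub_log_one_sub (h.hasDerivAt_V t) (h.V_mem t)).const_mul A)

theorem IsInteriorOrbit.Ω_mem (h : IsInteriorOrbit l σ σ' ω F U V E Ω)
    (hωpos : ∀ η, 0 < η → 0 < ω η) (t : ℝ) : Ω t ∈ Ioo (0 : ℝ) 1 := by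
  have hω := hωpos _ (h.E_pos t)
  rw [h.Ω_eq]
  exact ⟨by positivity, (div_lt_one (by positivity)).2 (lt_one_add _)⟩

theorem IsInteriorOrbit.eventually_deriv_Ω_le {V₀ Flo : ℝ}
    (h : IsInteriorOrbit l σ σ' ω F U V E Ω) (hσ : ∀ η, 0 < η → 0 ≤ σ η)
    (hωpos : ∀ η, 0 < η → 0 < ω η) (hFlo : 0 ≤ Flo) (hF : ∀ η, 0 < η → Flo ≤ F η) (hV₀ : 0 < V₀)
    (hU : Tendsto U atTop (𝓝 0)) (hV : Tendsto V atTop (𝓝 V₀)) (hΩ : Tendsto Ω atTop (𝓝 0)) :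
    ∀ᶠ t in atTop, -(Ω t * (1 - Ω t) * F (E t) * flux (σ (E t)) (U t) (V t)) ≤
      -(Flo * (V₀ / 2) * Ω t) := by
  have hlim : Tendsto (fun t => (1 - Ω t) * ((1 - U t) * V t)) atTop (𝓝 V₀) := by
    simpa only [sub_zero, one_mul] using (hΩ.const_sub 1).mul ((hU.const_sub 1).mul hV)
  filter_upwards [hlim.eventually_const_le (half_lt_self hV₀)] with t ht
  have hΩt := h.Ω_mem hωpos t
  have hE := h.E_pos t
  have hflux := one_sub_mul_le_flux (hσ _ hE) (h.U_mem t).1.le (h.V_mem t).1.le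
  have hle : V₀ / 2 ≤ (1 - Ω t) * flux (σ (E t)) (U t) (V t) :=
    ht.trans (mul_le_mul_of_nonneg_left hflux (sub_nonneg.2 hΩt.2.le))
  calc -(Ω t * (1 - Ω t) * F (E t) * flux (σ (E t)) (U t) (V t))
      = -(F (E t) * ((1 - Ω t) * flux (σ (E t)) (U t) (V t)) * Ω t) := by ring
    _ ≤ -(Flo * (V₀ / 2) * Ω t) := neg_le_neg <| mul_le_mul_of_nonneg_right
        (mul_le_mul (hF _ hE) hle (half_pos hV₀).le (hFlo.trans (hF _ hE))) hΩt.1.le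

theorem IsInteriorOrbit.exists_eventually_le_deriv_logitCombination {A : ℝ}
    (h : IsInteriorOrbit l σ σ' ω F U V E Ω) (hl : -1 < l) (hA : A * s = 1 - s)
    (hAl : A ≤ 3 + 2 * l) (hσ : ∀ η, 0 < η → σ η ∈ Ioc (0 : ℝ) 1)
    (hωpos : ∀ η, 0 < η → 0 < ω η) (hU : Tendsto U atTop (𝓝 0))
    (hσO : (fun t => σ (E t)) =O[atTop] Ω) (hσ'O : (fun t => σ' (E t) - s) =O[atTop] Ω) :
    ∃ K, 0 ≤ K ∧ ∀ᶠ t in atTop, -(K * Ω t) ≤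
      growthU l (σ (E t)) (σ' (E t)) (U t) (V t) +
        A * growthV (σ (E t)) (σ' (E t)) (U t) (V t) := by
  obtain ⟨K, hK, hbound⟩ :=
    ((hσO.add hσ'O.abs_left).const_mul_left (1 + 2 * |A|)).exists_nonneg
  refine ⟨K, hK, ?_⟩
  filter_upwards [hbound.bound, hU.eventually_le_const (u := 1 / 2) (by norm_num)] with t ht hUt
  rw [norm_of_nonneg (h.Ω_mem hωpos t).1.le] at ht
  exact (neg_le_neg ((le_norm_self _).trans ht)).trans <|
    neg_mul_le_growthU_add_mul_growthV hl hA hAl (Ioc_subset_Icc_self (hσ _ (h.E_pos t)))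
      ⟨(h.U_mem t).1.le, hUt⟩ (Ioo_subset_Icc_self (h.V_mem t))

theorem lt_of_attractsInteriorOrbit {Flo : ℝ} (hl : -1 < l) (hs : 0 < s)
    (hσ : ∀ η, 0 < η → σ η ∈ Ioc (0 : ℝ) 1) (hωpos : ∀ η, 0 < η → 0 < ω η)
    (hωmono : StrictMonoOn ω (Ioi 0)) (hFlo : 0 < Flo) (hF : ∀ η, 0 < η → Flo ≤ F η)
    (hσO : σ =O[𝓝[>] 0] fun η => ω η / (1 + ω η))
    (hσ'O : (fun η => σ' η - s) =O[𝓝[>] 0] fun η => ω η / (1 + ω η))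
    (h : AttractsInteriorOrbit l σ σ' ω F (0, 1 / (1 + s), 0)) : s < 1 / (4 + 2 * l) := by
  obtain ⟨U, V, E, Ω, horbit, hlim⟩ := h
  by_contra! hge
  have hV₀ : 1 / (1 + s) ∈ Ioo (0 : ℝ) 1 :=
    ⟨by positivity, (div_lt_one (by positivity)).2 (by linarith)⟩
  have hU : Tendsto U atTop (𝓝 0) := hlim.fst_nhds
  have hV : Tendsto V atTop (𝓝 (1 / (1 + s))) := hlim.snd_nhds.fst_nhds
  have hΩ : Tendsto Ω atTop (𝓝 0) := hlim.snd_nhds.snd_nhds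
  have hΩ_eq : (fun t => ω (E t) / (1 + ω (E t))) = Ω := funext fun t => (horbit.Ω_eq t).symm
  have hE : Tendsto E atTop (𝓝[>] 0) :=
    tendsto_nhdsGT_zero_of_tendsto_div_one_add hωpos hωmono horbit.E_pos (hΩ_eq ▸ hΩ)
  have hA : (1 - s) / s * s = 1 - s := div_mul_cancel₀ _ hs.ne'
  have hAl : (1 - s) / s ≤ 3 + 2 * l := by
    rw [div_le_iff₀ (by linarith)] at hge
    rw [div_le_iff₀ hs]
    linarith
  obtain ⟨K, hK, hgrowth⟩ := horbit.exists_eventually_le_deriv_logitCombination hl hA hAl hσ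
    hωpos hU (hΩ_eq ▸ hσO.comp_tendsto hE) (hΩ_eq ▸ hσ'O.comp_tendsto hE)
  refine not_tendsto_atBot_of_hasDerivAt_ge (horbit.hasDerivAt_logitCombination _)
    horbit.hasDerivAt_Ω (fun t => (horbit.Ω_mem hωpos t).1.le) hK
    (mul_pos hFlo (half_pos hV₀.1)) hgrowth
    (horbit.eventually_deriv_Ω_le (fun η hη => (hσ η hη).1.le) hωpos hFlo.le hF hV₀.1 hU hV hΩ)
    (tendsto_logitCombination hV₀ (tendsto_nhdsWithin_iff.2 ⟨hU, ?_⟩) hV)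
  exact Eventually.of_forall fun t => (horbit.U_mem t).1

theorem isBigO_sub_of_comp_div_one_add_eq {g φ : ℝ → ℝ} {δ : ℝ} (hωpos : ∀ η, 0 < η → 0 < ω η)
    (hω₀ : Tendsto ω (𝓝[>] 0) (𝓝 0)) (hδ : 0 < δ)
    (hg : DifferentiableWithinAt ℝ g (Ico 0 δ) 0)
    (hgφ : ∀ η, 0 < η → ω η / (1 + ω η) < δ → g (ω η / (1 + ω η)) = φ η) :
    (fun η => φ η - g 0) =O[𝓝[>] 0] fun η => ω η / (1 + ω η) := by
  have hΩ₀ := tendsto_div_one_add_self hω₀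
  have hδ_mem : ∀ᶠ η in 𝓝[>] 0, 0 < η ∧ ω η / (1 + ω η) < δ :=
    eventually_mem_nhdsWithin.and (hΩ₀.eventually_lt_const hδ)
  have hΩ : Tendsto (fun η => ω η / (1 + ω η)) (𝓝[>] 0) (𝓝[Ico 0 δ] 0) :=
    tendsto_nhdsWithin_iff.2 ⟨hΩ₀, hδ_mem.mono fun η hη => by
      have hω := hωpos η hη.1
      exact ⟨by positivity, hη.2⟩⟩
  have hO : (fun x => g x - g 0) =O[𝓝[Ico 0 δ] 0] fun x => x := by
    simpa only [sub_zero] using hg.isBigO_sub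
  refine (hO.comp_tendsto hΩ).congr' ?_ EventuallyEq.rfl
  filter_upwards [hδ_mem] with η hη
  rw [Function.comp_apply, hgφ η hη.1 hη.2]

end Attraction

theorem stmt16_general
    (l : ℝ) (hl : -1 < l)
    (σ σ' : ℝ → ℝ)
    (hσderiv : ∀ η : ℝ, 0 < η → HasDerivAt σ (σ' η) η)
    (hσ'cont : ContinuousOn σ' (Ioi 0))
    (hσrange : ∀ η : ℝ, 0 < η → σ η ∈ Ioc 0 1)
    (ω ω' : ℝ → ℝ)
    (hωderiv : ∀ η : ℝ, 0 < η → HasDerivAt ω (ω' η) η)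
    (hωpos : ∀ η : ℝ, 0 < η → 0 < ω η)
    (hωmono : StrictMonoOn ω (Ioi 0))
    (hω0 : Tendsto ω (𝓝[>] 0) (𝓝 0))
    (F : ℝ → ℝ) (hFdef : ∀ η : ℝ, 0 < η → F η = σ η * (ω' η / ω η))
    (Flo : ℝ) (hFlo : 0 < Flo) (hFbound : ∀ η : ℝ, 0 < η → Flo ≤ F η)
    (σ'₀ : ℝ) (hσ'₀pos : 0 < σ'₀)
    (hσO : σ =O[𝓝[>] 0] fun η => ω η / (1 + ω η))
    (hσ'O : (fun η => σ' η - σ'₀) =O[𝓝[>] 0] fun η => ω η / (1 + ω η)) :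
    AttractsInteriorOrbit l σ σ' ω F (0, 1 / (1 + σ'₀), 0) ↔ σ'₀ < 1 / (4 + 2 * l) := by
  have hΩ₀ := tendsto_div_one_add_self hω0
  refine ⟨lt_of_attractsInteriorOrbit hl hσ'₀pos hσrange hωpos hωmono hFlo hFbound hσO hσ'O,
    fun hlt => attractsInteriorOrbit_of_lt hl hσ'₀pos hlt hσderiv hσ'cont hσrange
      (hσO.trans_tendsto hΩ₀) ?_ hωderiv hωpos hω0 hFdef⟩
  exact tendsto_sub_nhds_zero_iff.1 (hσ'O.trans_tendsto hΩ₀)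

/-- If `σ`, `σ'`, `F` extend (as functions of `Ω`) to `C¹` functions on `[0,δ)` with `σ(0) = 0`, `σ'(0) = σ'₀ ∈ (0,2)`, `F(0) = F₀ > 0`, then the fixed point `B₁ = (0, 1/(1+σ'₀), 0)` attracts some interior orbit if and only if `σ'₀ < 1/(4+2l)`. -/
theorem stmt16
    (l : ℝ) (hl : -1 < l)
    (σ σ' : ℝ → ℝ)
    (hσderiv : ∀ η : ℝ, 0 < η → HasDerivAt σ (σ' η) η)
    (hσ'cont : ContinuousOn σ' (Ioi 0))
    (hσrange : ∀ η : ℝ, 0 < η → σ η ∈ Ioo 0 (1 / (3 + 2 * l)))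
    (hσ0 : Tendsto σ (nhdsWithin 0 (Ioi 0)) (nhds 0))
    (k₁ k₂ : ℝ) (hk₁ : 0 < k₁) (hk₁₂ : k₁ < k₂)
    (hσ'near : ∃ η₀ > (0:ℝ), ∀ η ∈ Ioo (0:ℝ) η₀, σ' η ∈ Ioo k₁ k₂)
    (ω ω' : ℝ → ℝ)
    (hωsmooth : ContDiffOn ℝ (⊤ : ℕ∞) ω (Ioi 0))
    (hωderiv : ∀ η : ℝ, 0 < η → HasDerivAt ω (ω' η) η)
    (hωpos : ∀ η : ℝ, 0 < η → 0 < ω η)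
    (hωmono : StrictMonoOn ω (Ioi 0))
    (hω0 : Tendsto ω (nhdsWithin 0 (Ioi 0)) (nhds 0))
    (F : ℝ → ℝ) (hFdef : ∀ η : ℝ, 0 < η → F η = σ η * (ω' η / ω η))
    (Flo Fhi : ℝ) (hFlo : 0 < Flo)
    (hFbounds : ∀ η : ℝ, 0 < η → F η ∈ Icc Flo Fhi)
    (δ σ'₀ F₀ : ℝ) (hδ : 0 < δ) (hσ'₀pos : 0 < σ'₀) (hσ'₀lt : σ'₀ < 2) (hF₀ : 0 < F₀)
    (σe σ'e Fe : ℝ → ℝ)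
    (hσeC1 : ContDiffOn ℝ 1 σe (Ico 0 δ))
    (hσ'eC1 : ContDiffOn ℝ 1 σ'e (Ico 0 δ))
    (hFeC1 : ContDiffOn ℝ 1 Fe (Ico 0 δ))
    (hσe0 : σe 0 = 0) (hσ'e0 : σ'e 0 = σ'₀) (hFe0 : Fe 0 = F₀)
    (hcompat : ∀ η : ℝ, 0 < η → ω η / (1 + ω η) < δ →
      σe (ω η / (1 + ω η)) = σ η ∧ σ'e (ω η / (1 + ω η)) = σ' η ∧
        Fe (ω η / (1 + ω η)) = F η) :
    (∃ U V E Ω : ℝ → ℝ,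
      (∀ t : ℝ, Ω t = ω (E t) / (1 + ω (E t))) ∧
      (∀ t : ℝ, U t ∈ Ioo (0:ℝ) 1) ∧ (∀ t : ℝ, V t ∈ Ioo (0:ℝ) 1) ∧
      (∀ t : ℝ, 0 < E t) ∧ Continuous E ∧
      (∀ t : ℝ, HasDerivAt U
        (U t * (1 - U t) * ((3 + 2 * l - (4 + 2 * l) * U t) * (1 - V t)
          - (1 + σ (E t) - σ' (E t)) * ((1 - U t + σ (E t) * U t) * V t))) t) ∧
      (∀ t : ℝ, HasDerivAt V
        (V t * (1 - V t) * ((2 * U t - 1) * (1 - V t + 2 * σ (E t) * V t)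
          + σ' (E t) * ((1 - U t + σ (E t) * U t) * V t))) t) ∧
      (∀ t : ℝ, HasDerivAt Ω
        (-(Ω t * (1 - Ω t) * F (E t) * ((1 - U t + σ (E t) * U t) * V t))) t) ∧
      Tendsto (fun t => (U t, V t, Ω t)) atTop
        (nhds ((0:ℝ), 1 / (1 + σ'₀), (0:ℝ)))) ↔ σ'₀ < 1 / (4 + 2 * l) := by
  have hO {g φ : ℝ → ℝ} (hg : ContDiffOn ℝ 1 g (Ico 0 δ)) :=
    isBigO_sub_of_comp_div_one_add_eq (φ := φ) hωpos hω0 hδ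
      (hg.differentiableOn one_ne_zero 0 ⟨le_rfl, hδ⟩)
  exact attractsInteriorOrbit_iff.symm.trans <| stmt16_general l hl σ σ' hσderiv hσ'cont
    (fun η hη => ⟨(hσrange η hη).1,
      (hσrange η hη).2.le.trans ((div_le_one (by linarith)).2 (by linarith))⟩)
    ω ω' hωderiv hωpos hωmono hω0 F hFdef Flo hFlo (fun η hη => (hFbounds η hη).1) σ'₀ hσ'₀pos
    (by simpa only [hσe0, sub_zero] using hO hσeC1 fun η hη hlt => (hcompat η hη hlt).1)
    (hσ'e0 ▸ hO hσ'eC1 fun η hη hlt => (hcompat η hη hlt).2.1)
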